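/- Fix real numbers E, ε with √E > ε > 0 and fix δ ∈ (0,1). For each integer N ≥ 1, let M_N be the largest integer M for which there exist distinct points a⁽¹⁾, …, a⁽ᴹ⁾ in the closed Euclidean ball of radius √E centered at the origin in ℝᴺ whose cumulative error measure satisfies Δ ≤ δ. Then liminf_{N→∞} (log₂ M_N)/N ≥ log₂(√E/ε) and limsup_{N→∞} (log₂ M_N)/N ≤ log₂(1 + √E/ε). -/

import Mathlib

/-!
Both bounds are volume counts.

Upper bound: the decoding regions `Sⁱ \ Dⁱ` are pairwise disjoint and lie in the ball of radius
`√E + ε`, and an `(ε,δ)`-distinguishable code of size `M` makes their total volume at least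
`(1 - δ) M vol(Sⁱ)`. Hence `(1 - δ) M ≤ (1 + √E/ε)ᴺ` (`card_le_of_cumErr_le`).

Lower bound: if `x ∈ Dⁱ` then `x ∈ Sⁱ ∩ Sʲ` for some `j ≠ i`, so `vol(Dⁱ)` is at most the sum of the
overlaps `vol(Sⁱ ∩ Sʲ)`. By Tonelli the overlap with a fixed ball of radius `ε` integrates to
`v²` over all centres, where `v` is the volume of such a ball, so over a uniform centre in the ball
of radius `√E` it averages at most `v q` with `q = (ε/√E)ᴺ`. Choosing the codewords one at a time,
each no worse than average (`exists_next_codeword`), yields for every `n ≥ 1` a code of `n`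
points with `Δ ≤ (n - 1) q` (`exists_code_cumErr`). The choice `n = ⌊δ/q⌋ + 1` has error at most `δ` and
`n ≥ δ (√E/ε)ᴺ`.

In both bounds `δ` only enters through a constant factor, which disappears from
`(log₂ M_N)/N` in the limit.
-/

open Metric MeasureTheory Filter

/-- The error region `Dⁱ` of the `i`-th codeword under minimum-distance decoding. -/
def errRegion {N M : ℕ} (ε : ℝ) (a : Fin M → EuclideanSpace ℝ (Fin N)) (i : Fin M) :
    Set (EuclideanSpace ℝ (Fin N)) :=
  {x | x ∈ closedBall (a i) ε ∧ ∃ j : Fin M, j ≠ i ∧ dist x (a j) ≤ dist x (a i)}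

/-- The cumulative error measure `Δ = (1/M) Σᵢ vol(Dⁱ)/vol(Sⁱ)`. -/
noncomputable def cumErr {N M : ℕ} (ε : ℝ) (a : Fin M → EuclideanSpace ℝ (Fin N)) : ℝ :=
  (1 / (M : ℝ)) * ∑ i : Fin M,
    (volume (errRegion ε a i)).toReal / (volume (closedBall (a i) ε)).toReal

/-- `M_N`: the largest number of distinct points of the closed ball of radius `√E` in `ℝᴺ`
whose cumulative error measure is at most `δ`, i.e. the maximal cardinality of an
`(ε,δ)`-distinguishable set in the ball. -/
noncomputable def maxCode (E ε δ : ℝ) (N : ℕ) : ℕ :=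
  sSup {M : ℕ | ∃ a : Fin M → EuclideanSpace ℝ (Fin N), Function.Injective a ∧
    (∀ i, a i ∈ closedBall (0 : EuclideanSpace ℝ (Fin N)) (Real.sqrt E)) ∧
    cumErr ε a ≤ δ}

/-! ### Overlap of two balls -/

/-- The volume of the intersection of the balls of radius `ε` about `c` and `y`. -/
noncomputable def overlap {N : ℕ} (ε : ℝ) (c y : EuclideanSpace ℝ (Fin N)) : ℝ :=
  volume.real (closedBall c ε ∩ closedBall y ε)

lemma overlap_comm {N : ℕ} (ε : ℝ) (c y : EuclideanSpace ℝ (Fin N)) :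
    overlap ε c y = overlap ε y c := by
  rw [overlap, overlap, Set.inter_comm]

lemma overlap_self {N : ℕ} (ε : ℝ) (c : EuclideanSpace ℝ (Fin N)) :
    overlap ε c c = volume.real (closedBall c ε) := by
  rw [overlap, Set.inter_self]

lemma real_closedBall {N : ℕ} {r : ℝ} (hr : 0 ≤ r) (c : EuclideanSpace ℝ (Fin N)) :
    volume.real (closedBall c r)
      = r ^ N * volume.real (ball (0 : EuclideanSpace ℝ (Fin N)) 1) := by
  rw [Measure.addHaar_real_closedBall _ _ hr]
  simp

lemma real_unitBall_pos (N : ℕ) :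
    0 < volume.real (ball (0 : EuclideanSpace ℝ (Fin N)) 1) :=
  ENNReal.toReal_pos (measure_ball_pos _ _ one_pos).ne' measure_ball_lt_top.ne

/-- Tonelli: for fixed `c`, the overlap is the slice measure of the closed set
`{(x, y) | x ∈ closedBall c ε, dist x y ≤ ε}`. -/
lemma lintegral_overlap {N : ℕ} (ε : ℝ) (c : EuclideanSpace ℝ (Fin N)) :
    Measurable (fun y => volume (closedBall c ε ∩ closedBall y ε)) ∧
    ∫⁻ y, volume (closedBall c ε ∩ closedBall y ε)
      = volume (closedBall c ε) * volume (closedBall c ε) := by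
  let S : Set (EuclideanSpace ℝ (Fin N) × EuclideanSpace ℝ (Fin N)) :=
    {p | dist p.1 c ≤ ε ∧ dist p.1 p.2 ≤ ε}
  have hS : MeasurableSet S := by
    apply IsClosed.measurableSet
    exact IsClosed.and (isClosed_le (continuous_fst.dist continuous_const) continuous_const)
      (isClosed_le (continuous_fst.dist continuous_snd) continuous_const)
  have e : ∀ y, (fun x => (x, y)) ⁻¹' S = closedBall c ε ∩ closedBall y ε := by
    intro y; ext x; simp [S]
  have h1 := Measure.prod_apply_symm (μ := volume) (ν := volume) hS
  have h2 := Measure.prod_apply (μ := volume) (ν := volume) hS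
  have h3 := measurable_measure_prodMk_right
    (μ := (volume : Measure (EuclideanSpace ℝ (Fin N)))) hS
  simp only [e] at h1 h3
  refine ⟨h3, ?_⟩
  rw [← h1, h2]
  have e2 : ∀ x, volume (Prod.mk x ⁻¹' S)
      = (closedBall c ε).indicator (fun _ => volume (closedBall c ε)) x := by
    intro x
    by_cases hx : x ∈ closedBall c ε
    · rw [Set.indicator_of_mem hx]
      have : Prod.mk x ⁻¹' S = closedBall x ε := by
        ext y
        simp only [mem_closedBall] at hx
        simp [S, hx, dist_comm x y]
      rw [this, Measure.addHaar_closedBall_center, Measure.addHaar_closedBall_center volume c]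
    · rw [Set.indicator_of_notMem hx]
      have : Prod.mk x ⁻¹' S = ∅ := by
        ext y
        simp only [mem_closedBall] at hx
        simp [S, hx]
      rw [this, measure_empty]
  simp only [e2]
  rw [lintegral_indicator isClosed_closedBall.measurableSet, setLIntegral_const]

lemma integrable_overlap {N : ℕ} (ε : ℝ) (c : EuclideanSpace ℝ (Fin N)) :
    Integrable (overlap ε c) := by
  obtain ⟨h1, h2⟩ := lintegral_overlap ε c
  refine integrable_toReal_of_lintegral_ne_top h1.aemeasurable ?_
  rw [h2]
  exact ENNReal.mul_ne_top measure_closedBall_lt_top.ne measure_closedBall_lt_top.ne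

lemma integral_overlap {N : ℕ} (ε : ℝ) (c : EuclideanSpace ℝ (Fin N)) :
    ∫ y, overlap ε c y = volume.real (closedBall c ε) * volume.real (closedBall c ε) := by
  obtain ⟨h1, h2⟩ := lintegral_overlap ε c
  have := integral_toReal (μ := volume) h1.aemeasurable
    (ae_of_all _ fun y => (measure_mono Set.inter_subset_left).trans_lt
      (measure_closedBall_lt_top (x := c) (r := ε)))
  rw [h2, ENNReal.toReal_mul] at this
  exact this

/-! ### Random coding -/

/-- First-moment argument for one codeword: some new point of the ball of radius `R` has total
overlap with the given balls no larger than the average. -/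
lemma exists_next_codeword {N n : ℕ} (hN : 0 < N) {ε R : ℝ} (hε : 0 < ε) (hR : 0 < R)
    (a : Fin n → EuclideanSpace ℝ (Fin N)) :
    ∃ y ∈ closedBall (0 : EuclideanSpace ℝ (Fin N)) R, y ∉ Set.range a ∧
      ∑ i, overlap ε (a i) y
        ≤ n * volume.real (closedBall (0 : EuclideanSpace ℝ (Fin N)) ε) * (ε / R) ^ N := by
  -- `Nonempty (Fin N)` makes the volume atomless, so that the old codewords form a null set.
  have : Nonempty (Fin N) := ⟨⟨0, hN⟩⟩
  set B := closedBall (0 : EuclideanSpace ℝ (Fin N)) R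
  set v := volume.real (closedBall (0 : EuclideanSpace ℝ (Fin N)) ε) with hv
  have hBtop : volume B ≠ ⊤ := measure_closedBall_lt_top.ne
  have : IsFiniteMeasure (volume.restrict B) := ⟨by
    rw [Measure.restrict_apply_univ]; exact hBtop.lt_top⟩
  have hne : (volume.restrict B) ≠ 0 := by
    rw [Ne, Measure.restrict_eq_zero]
    exact (measure_closedBall_pos _ _ hR).ne'
  have hint : Integrable (fun y => ∑ i, overlap ε (a i) y) :=
    integrable_finsetSum _ fun i _ => integrable_overlap ε (a i)
  have hnull : (volume.restrict B) (Bᶜ ∪ Set.range a) = 0 := by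
    rw [measure_union_null_iff]
    constructor
    · rw [Measure.restrict_apply isClosed_closedBall.measurableSet.compl]
      simp [B]
    · exact le_antisymm ((Measure.restrict_apply_le _ _).trans
        ((Set.finite_range a).measure_zero _).le) bot_le
  obtain ⟨y, hy, hle⟩ := exists_notMem_null_le_average hne hint.integrableOn hnull
  simp only [Set.mem_union, Set.mem_compl_iff, not_or, not_not] at hy
  refine ⟨y, hy.1, hy.2, hle.trans ?_⟩
  rw [setAverage_eq, smul_eq_mul]
  have h1 : ∫ y in B, ∑ i, overlap ε (a i) y ≤ n * (v * v) := by
    refine (setIntegral_le_integral hint (ae_of_all _ fun y =>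
      Finset.sum_nonneg fun i _ => measureReal_nonneg)).trans ?_
    rw [integral_finsetSum _ fun i _ => integrable_overlap ε (a i)]
    simp only [integral_overlap, real_closedBall hε.le, hv]
    simp
  have hω := real_unitBall_pos N
  have hB : volume.real B = R ^ N * volume.real (ball (0 : EuclideanSpace ℝ (Fin N)) 1) :=
    real_closedBall hR.le _
  have hBpos : 0 < volume.real B := by rw [hB]; positivity
  calc _ ≤ (volume.real B)⁻¹ * (n * (v * v)) := by gcongr
    _ = _ := by
      rw [hB, hv, real_closedBall hε.le, div_pow]
      field_simp

/-- Greedy random coding. The diagonal terms are kept in the double sum and account for the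
summand `n * v`. -/
lemma exists_code {N : ℕ} (hN : 0 < N) {ε R : ℝ} (hε : 0 < ε) (hR : 0 < R) (n : ℕ) :
    ∃ a : Fin n → EuclideanSpace ℝ (Fin N), Function.Injective a ∧
      (∀ i, a i ∈ closedBall (0 : EuclideanSpace ℝ (Fin N)) R) ∧
      ∑ i, ∑ j, overlap ε (a i) (a j)
        ≤ n * volume.real (closedBall (0 : EuclideanSpace ℝ (Fin N)) ε)
          + n * (n - 1) * volume.real (closedBall (0 : EuclideanSpace ℝ (Fin N)) ε)
            * (ε / R) ^ N := by
  induction n with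
  | zero => exact ⟨Fin.elim0, fun i => i.elim0, fun i => i.elim0, by simp⟩
  | succ n ih =>
    obtain ⟨a, hinj, hmem, hsum⟩ := ih
    obtain ⟨y, hy, hyr, hys⟩ := exists_next_codeword hN hε hR a
    refine ⟨Fin.cons y a, Fin.cons_injective_iff.2 ⟨hyr, hinj⟩, ?_, ?_⟩
    · intro i
      refine Fin.cases ?_ (fun i => ?_) i
      · simpa using hy
      · simpa using hmem i
    · simp only [Fin.sum_univ_succ, Fin.cons_zero, Fin.cons_succ, Finset.sum_add_distrib,
        overlap_self, overlap_comm ε y]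
      have : volume.real (closedBall y ε)
          = volume.real (closedBall (0 : EuclideanSpace ℝ (Fin N)) ε) := by
        rw [real_closedBall hε.le, real_closedBall hε.le]
      rw [this]
      push_cast
      linarith

lemma errRegion_subset {N M : ℕ} (ε : ℝ) (a : Fin M → EuclideanSpace ℝ (Fin N)) (i : Fin M) :
    errRegion ε a i ⊆ ⋃ j ∈ Finset.univ.erase i, closedBall (a i) ε ∩ closedBall (a j) ε := by
  rintro x ⟨hx, j, hj, hd⟩
  simp only [Set.mem_iUnion]
  exact ⟨j, by simp [hj], hx, hd.trans hx⟩

lemma errRegion_le {N M : ℕ} (ε : ℝ) (a : Fin M → EuclideanSpace ℝ (Fin N)) (i : Fin M) :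
    volume.real (errRegion ε a i)
      ≤ ∑ j, overlap ε (a i) (a j) - volume.real (closedBall (a i) ε) := by
  have hfin : volume (⋃ j ∈ Finset.univ.erase i, closedBall (a i) ε ∩ closedBall (a j) ε) ≠ ⊤ := by
    refine ((measure_mono ?_).trans_lt (measure_closedBall_lt_top (x := a i) (r := ε))).ne
    exact Set.iUnion₂_subset fun j _ => Set.inter_subset_left
  have h1 := (measureReal_mono (errRegion_subset ε a i) hfin).trans
    (measureReal_biUnion_finset_le (μ := volume) _ _)
  have h2 := Finset.sum_erase_add Finset.univ (fun j => overlap ε (a i) (a j))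
    (Finset.mem_univ i)
  simp only [overlap_self] at h2
  rw [← h2]
  simpa [overlap] using h1

lemma cumErr_eq {N M : ℕ} {ε : ℝ} (hε : 0 < ε) (a : Fin M → EuclideanSpace ℝ (Fin N)) :
    cumErr ε a = (∑ i, volume.real (errRegion ε a i))
      / (M * volume.real (closedBall (0 : EuclideanSpace ℝ (Fin N)) ε)) := by
  have h : ∀ i, (volume (closedBall (a i) ε)).toReal
      = volume.real (closedBall (0 : EuclideanSpace ℝ (Fin N)) ε) := by
    intro i
    rw [real_closedBall hε.le]
    exact real_closedBall hε.le (a i)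
  simp only [cumErr, h]
  rw [← Finset.sum_div, div_mul_div_comm, one_mul]
  rfl

lemma exists_code_cumErr {N : ℕ} (hN : 0 < N) {ε R : ℝ} (hε : 0 < ε) (hR : 0 < R) (n : ℕ) :
    ∃ a : Fin (n + 1) → EuclideanSpace ℝ (Fin N), Function.Injective a ∧
      (∀ i, a i ∈ closedBall (0 : EuclideanSpace ℝ (Fin N)) R) ∧
      cumErr ε a ≤ n * (ε / R) ^ N := by
  obtain ⟨a, hinj, hmem, hsum⟩ := exists_code hN hε hR (n + 1)
  refine ⟨a, hinj, hmem, ?_⟩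
  have hω := real_unitBall_pos N
  have h1 : ∑ i, volume.real (errRegion ε a i) ≤ _ :=
    Finset.sum_le_sum fun i _ => errRegion_le ε a i
  rw [Finset.sum_sub_distrib] at h1
  simp only [real_closedBall hε.le, Finset.sum_const, Finset.card_univ, Fintype.card_fin,
    nsmul_eq_mul] at h1 hsum
  rw [cumErr_eq hε, real_closedBall hε.le, div_le_iff₀ (by positivity)]
  push_cast at *
  linarith

/-! ### Packing -/

lemma measurableSet_errRegion {N M : ℕ} (ε : ℝ) (a : Fin M → EuclideanSpace ℝ (Fin N))
    (i : Fin M) : MeasurableSet (errRegion ε a i) := by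
  have : errRegion ε a i
      = closedBall (a i) ε ∩ ⋃ j, ⋃ _ : j ≠ i, {x | dist x (a j) ≤ dist x (a i)} := by
    ext x; simp [errRegion]
  rw [this]
  refine isClosed_closedBall.measurableSet.inter
    (MeasurableSet.iUnion fun j => MeasurableSet.iUnion fun _ => ?_)
  exact (isClosed_le (by fun_prop) (by fun_prop)).measurableSet

/-- Packing bound from the disjoint decoding regions `Sⁱ \ Dⁱ`. -/
lemma card_le_of_cumErr_le {N M : ℕ} {ε R δ : ℝ} (hε : 0 < ε) (hR : 0 < R)
    (hδ1 : δ < 1) (a : Fin M → EuclideanSpace ℝ (Fin N))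
    (hmem : ∀ i, a i ∈ closedBall (0 : EuclideanSpace ℝ (Fin N)) R) (herr : cumErr ε a ≤ δ) :
    (M : ℝ) ≤ (1 + R / ε) ^ N / (1 - δ) := by
  have hω := real_unitBall_pos N
  set ω := volume.real (ball (0 : EuclideanSpace ℝ (Fin N)) 1)
  rcases Nat.eq_zero_or_pos M with rfl | hM
  · have : 0 < 1 - δ := by linarith
    simp only [Nat.cast_zero]
    positivity
  have hM' : (0 : ℝ) < M := by exact_mod_cast hM
  rw [cumErr_eq hε, real_closedBall hε.le, div_le_iff₀ (by positivity)] at herr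
  have hdisj : Pairwise (Function.onFun Disjoint fun i => closedBall (a i) ε \ errRegion ε a i) := by
    intro i j hij
    rw [Function.onFun, Set.disjoint_left]
    rintro x ⟨hxi, hxi'⟩ ⟨hxj, hxj'⟩
    rcases le_total (dist x (a i)) (dist x (a j)) with h | h
    · exact hxj' ⟨hxj, i, hij, h⟩
    · exact hxi' ⟨hxi, j, hij.symm, h⟩
  have hU := measureReal_iUnion_fintype (μ := volume) hdisj
    (fun i => isClosed_closedBall.measurableSet.diff (measurableSet_errRegion ε a i))
    (fun i => ((measure_mono Set.sdiff_subset).trans_lt measure_closedBall_lt_top).ne)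
  have hsub : (⋃ i, closedBall (a i) ε \ errRegion ε a i)
      ⊆ closedBall (0 : EuclideanSpace ℝ (Fin N)) (R + ε) := by
    refine Set.iUnion_subset fun i => Set.sdiff_subset.trans (closedBall_subset_closedBall' ?_)
    have := hmem i
    rw [mem_closedBall] at this
    linarith
  have hle := measureReal_mono (μ := volume) hsub measure_closedBall_lt_top.ne
  have hd : ∀ i, volume.real (closedBall (a i) ε \ errRegion ε a i)
      = ε ^ N * ω - volume.real (errRegion ε a i) := by
    intro i
    rw [measureReal_sdiff (fun x hx => hx.1) (measurableSet_errRegion ε a i)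
      measure_closedBall_lt_top.ne,
      real_closedBall hε.le]
  rw [hU, real_closedBall (by positivity)] at hle
  simp only [hd, Finset.sum_sub_distrib, Finset.sum_const, Finset.card_univ, Fintype.card_fin,
    nsmul_eq_mul] at hle
  rw [le_div_iff₀ (by linarith)]
  have hq : (1 + R / ε) ^ N * (ε ^ N * ω) = (R + ε) ^ N * ω := by
    rw [← mul_assoc, ← mul_pow]
    congr 2
    field_simp
    ring
  have : 0 < ε ^ N * ω := by positivity
  refine le_of_mul_le_mul_right ?_ this
  rw [hq]
  linarith

/-! ### Exponential rate of the maximal code size -/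

/-- Non-asymptotic bounds on `M_N`. For `N ≥ 1` the set of admissible sizes is bounded, so that its
supremum in `ℕ` is the genuine maximum. -/
lemma maxCode_bounds {E ε δ : ℝ} (hE : 0 < E) (hε : 0 < ε) (hδ0 : 0 < δ) (hδ1 : δ < 1)
    {N : ℕ} (hN : 0 < N) :
    δ * (Real.sqrt E / ε) ^ N ≤ maxCode E ε δ N ∧
    1 ≤ maxCode E ε δ N ∧
    (maxCode E ε δ N : ℝ) ≤ (1 + Real.sqrt E / ε) ^ N / (1 - δ) := by
  have hR : 0 < Real.sqrt E := Real.sqrt_pos.2 hE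
  set R := Real.sqrt E with hRdef
  set A := {M : ℕ | ∃ a : Fin M → EuclideanSpace ℝ (Fin N), Function.Injective a ∧
    (∀ i, a i ∈ closedBall (0 : EuclideanSpace ℝ (Fin N)) (Real.sqrt E)) ∧
    cumErr ε a ≤ δ} with hA
  have hmax : maxCode E ε δ N = sSup A := rfl
  have hub : ∀ M ∈ A, (M : ℝ) ≤ (1 + R / ε) ^ N / (1 - δ) := by
    rintro M ⟨a, -, hmem, herr⟩
    exact card_le_of_cumErr_le hε hR hδ1 a hmem herr
  have hbdd : BddAbove A := ⟨⌊(1 + R / ε) ^ N / (1 - δ)⌋₊, fun M hM => Nat.le_floor (hub M hM)⟩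
  -- The size `n + 1` with the largest `n` for which `n (ε/R)ᴺ ≤ δ`.
  set n := ⌊δ * (R / ε) ^ N⌋₊ with hn
  have hnA : n + 1 ∈ A := by
    obtain ⟨a, h1, h2, h3⟩ := exists_code_cumErr hN hε hR n
    refine ⟨a, h1, h2, h3.trans ?_⟩
    calc (n : ℝ) * (ε / R) ^ N ≤ (δ * (R / ε) ^ N) * (ε / R) ^ N := by
          gcongr
          exact Nat.floor_le (by positivity)
      _ = δ := by
          rw [mul_assoc, ← mul_pow]
          have : R / ε * (ε / R) = 1 := by field_simp
          rw [this, one_pow, mul_one]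
  have hle : n + 1 ≤ sSup A := le_csSup hbdd hnA
  rw [hmax]
  refine ⟨?_, by omega, hub _ (Nat.sSup_mem ⟨_, hnA⟩ hbdd)⟩
  refine (Nat.lt_floor_add_one _).le.trans ?_
  exact_mod_cast hle

/-- A sequence `c qᴺ` has exponential rate `log₂ q`. -/
lemma tendsto_rate {c q : ℝ} (hc : 0 < c) (hq : 0 < q) :
    Tendsto (fun N : ℕ => Real.logb 2 (c * q ^ N) / (N : ℝ)) atTop
      (nhds (Real.logb 2 q)) := by
  have h := (tendsto_const_div_atTop_nhds_zero_nat (Real.logb 2 c)).add_const (Real.logb 2 q)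
  rw [zero_add] at h
  refine h.congr' ?_
  filter_upwards [eventually_gt_atTop 0] with N hN
  have hN' : (N : ℝ) ≠ 0 := by exact_mod_cast hN.ne'
  rw [Real.logb_mul hc.ne' (pow_pos hq N).ne', Real.logb_pow]
  field_simp

/-- Euclidean-ball asymptotic form of Theorem 2: for `√E > ε > 0` and
`δ ∈ (0,1)`, `liminf (log₂ M_N)/N ≥ log₂(√E/ε)` and `limsup (log₂ M_N)/N ≤ log₂(1 + √E/ε)`. -/
theorem eps_delta_capacity_per_dof (E ε : ℝ) (hE : 0 < E) (hε : 0 < ε)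
    (hEε : ε < Real.sqrt E) (δ : ℝ) (hδ0 : 0 < δ) (hδ1 : δ < 1) :
    Real.logb 2 (Real.sqrt E / ε) ≤
      atTop.liminf (fun N : ℕ => Real.logb 2 (maxCode E ε δ N) / (N : ℝ)) ∧
    atTop.limsup (fun N : ℕ => Real.logb 2 (maxCode E ε δ N) / (N : ℝ)) ≤
      Real.logb 2 (1 + Real.sqrt E / ε) := by
  have hR : 0 < Real.sqrt E := Real.sqrt_pos.2 hE
  have hlow := tendsto_rate hδ0 (div_pos hR hε)
  have hupp := tendsto_rate (c := (1 - δ)⁻¹) (q := 1 + Real.sqrt E / ε)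
    (inv_pos.2 (by linarith)) (by positivity)
  have h1 : ∀ᶠ N : ℕ in atTop, Real.logb 2 (δ * (Real.sqrt E / ε) ^ N) / (N : ℝ)
      ≤ Real.logb 2 (maxCode E ε δ N) / (N : ℝ) := by
    filter_upwards [eventually_gt_atTop 0] with N hN
    have := (maxCode_bounds hE hε hδ0 hδ1 hN).1
    gcongr
    · norm_num
  have h2 : ∀ᶠ N : ℕ in atTop, Real.logb 2 (maxCode E ε δ N) / (N : ℝ)
      ≤ Real.logb 2 ((1 - δ)⁻¹ * (1 + Real.sqrt E / ε) ^ N) / (N : ℝ) := by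
    filter_upwards [eventually_gt_atTop 0] with N hN
    obtain ⟨-, hpos, hb⟩ := maxCode_bounds hE hε hδ0 hδ1 hN
    rw [div_eq_inv_mul] at hb
    have : (0 : ℝ) < maxCode E ε δ N := by exact_mod_cast hpos
    gcongr
    · norm_num
  -- Boundedness on both sides excludes the junk values of `liminf` and `limsup` in `ℝ`.
  have hbelow := hlow.isBoundedUnder_ge.mono_ge h1
  have habove := hupp.isBoundedUnder_le.mono_le h2
  constructor
  · rw [← hlow.liminf_eq]
    exact liminf_le_liminf h1 hlow.isBoundedUnder_ge habove.isCoboundedUnder_ge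
  · rw [← hupp.limsup_eq]
    exact limsup_le_limsup h2 hbelow.isCoboundedUnder_le hupp.isBoundedUnder_le
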